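/- For each n ≥ 1, the geometric realization of the triple (P⟨n⟩, ∂P⟨n⟩, EP⟨n⟩) consisting of the n-th folding polytope, its boundary, and its edge, is homeomorphic to the triple (B^n, S^{n−1}, B^{n−1}_+), where B^n is the unit n-ball, S^{n−1} its boundary sphere, and B^{n−1}_+ the closed upper hemisphere of S^{n−1}. -/

import Mathlib

/-!
STATEMENT 11 (Lemma 4.9 of the paper).  For each `n ≥ 1`, the realization of the
triple `(P⟨n⟩, ∂P⟨n⟩, EP⟨n⟩)` — the `n`-th folding polytope, its boundary, and its
edge — is homeomorphic to `(B^n, S^{n−1}, B^{n−1}_+)`, where `B^n` is the unit `n`-ball,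
`S^{n−1}` its boundary sphere, and `B^{n−1}_+` the closed upper hemisphere of `S^{n−1}`.

`P⟨n⟩` is obtained from `n+1` copies `Δⁿ_{(0)}, …, Δⁿ_{(n)}` of the standard topological
`n`-simplex by identifying the `n`-th facet `∂_n Δⁿ_{(k)}` with the `1`-facet
`∂_1 Δⁿ_{(k+1)}` (for `0 ≤ k < n`) via the order-preserving vertex correspondence;
its edge is the union of the facets `∂_0 Δⁿ_{(k)}` for `k = 1, …, n`, and its boundary
is the union of all the non-identified facets.
-/

noncomputable section

/-- The topological standard `n`-simplex. -/
def TopSimplex (n : ℕ) : Type :=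
  {x : Fin (n + 1) → ℝ // (∀ i, 0 ≤ x i) ∧ ∑ i, x i = 1}

instance (n : ℕ) : TopologicalSpace (TopSimplex n) :=
  inferInstanceAs (TopologicalSpace
    {x : Fin (n + 1) → ℝ // (∀ i, 0 ≤ x i) ∧ ∑ i, x i = 1})

/-- `x` lies in the `n`-th facet, `y` in the `1`-facet, and they correspond under the
order-preserving bijection of the two facets (vertex `0 ↦ 0`, vertex `i ↦ i+1` for
`1 ≤ i ≤ n−1`). -/
def GluePt (n : ℕ) (x y : TopSimplex n) : Prop :=
  x.1 (Fin.last n) = 0 ∧ y.1 1 = 0 ∧ y.1 0 = x.1 0 ∧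
    ∀ i : Fin (n + 1), 1 ≤ (i : ℕ) → (i : ℕ) ≤ n - 1 → y.1 (i + 1) = x.1 i

/-- The gluing relation on the disjoint union of the `n+1` copies of `Δⁿ`:
identify `∂_n Δⁿ_{(k)}` with `∂_1 Δⁿ_{(k+1)}` for `0 ≤ k < n`. -/
def GlueRel (n : ℕ) :
    (Fin (n + 1) × TopSimplex n) → (Fin (n + 1) × TopSimplex n) → Prop :=
  fun p q =>
    ((p.1 : ℕ) + 1 = (q.1 : ℕ) ∧ GluePt n p.2 q.2) ∨
    ((q.1 : ℕ) + 1 = (p.1 : ℕ) ∧ GluePt n q.2 p.2)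

/-- The `n`-th folding polytope `P⟨n⟩`. -/
def FoldingPolytope (n : ℕ) : Type := Quot (GlueRel n)

instance (n : ℕ) : TopologicalSpace (FoldingPolytope n) :=
  inferInstanceAs (TopologicalSpace (Quot (GlueRel n)))

/-- The boundary `∂P⟨n⟩`: the union of all the non-identified facets. -/
def foldingBoundary (n : ℕ) : Set (FoldingPolytope n) :=
  Quot.mk _ '' {p : Fin (n + 1) × TopSimplex n |
    ∃ j : Fin (n + 1), p.2.1 j = 0 ∧
      ¬(j = Fin.last n ∧ p.1 ≠ Fin.last n) ∧ ¬(j = 1 ∧ p.1 ≠ 0)}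

/-- The edge `EP⟨n⟩`: the union of the facets `∂_0 Δⁿ_{(k)}` for `k = 1, …, n`. -/
def foldingEdge (n : ℕ) : Set (FoldingPolytope n) :=
  Quot.mk _ '' {p : Fin (n + 1) × TopSimplex n | p.1 ≠ 0 ∧ p.2.1 0 = 0}

/-!
Relabel the vertices of the `k`-th copy of `Δⁿ` by reversing the blocks `1, …, k` and
`k + 1, …, n`, and read the relabelled barycentric coordinates as coordinates on the Weyl chamber
of increasing probability vectors. A point of the copy `k` becomes an increasing probability vector
with its `k`-th entry marked, and the gluing lets the mark move between equal neighbouring entries.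
Hence a point of `P⟨n⟩` amounts to the value `s` of the marked entry together with the increasing
list `t` of the remaining `n` entries. The number `s` and the chamber coordinates of `t` are the
barycentric coordinates of a point of an `n`-simplex; its boundary is `∂P⟨n⟩`, and its facet
`t₀ = 0` is `EP⟨n⟩`.

To map a simplex with a chosen facet to a ball with a hemisphere, place the origin so that the
chosen facet fills exactly the positive orthant, straighten the orthant to a half-space by a
positively homogeneous piecewise linear map, and rescale along rays so that the gauge of the simplex
becomes the Euclidean norm.
-/

instance (n : ℕ) : CompactSpace (TopSimplex n) :=
  isCompact_iff_compactSpace.mp (isCompact_stdSimplex ℝ (Fin (n + 1)))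

instance (n : ℕ) : T2Space (TopSimplex n) :=
  inferInstanceAs (T2Space {x : Fin (n + 1) → ℝ // (∀ i, 0 ≤ x i) ∧ ∑ i, x i = 1})

section ChamberCoord

variable {n : ℕ}

/-- Barycentric coordinates of a vector with respect to the vertices of the Weyl chamber
`0 ≤ r 0 ≤ ⋯ ≤ r n`, the `i`-th vertex being the barycentre of the last `n + 1 - i` vertices of the
standard simplex. -/
def chamberCoord (r : Fin (n + 1) → ℝ) : Fin (n + 1) → ℝ :=
  Fin.cons ((n + 1) * r 0) fun i : Fin n => (n - i) * (r i.succ - r i.castSucc)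

/-- The vector with given chamber coordinates. -/
def ofChamberCoord (u : Fin (n + 1) → ℝ) (j : Fin (n + 1)) : ℝ :=
  Fin.induction (u 0 / (n + 1)) (fun i rᵢ => rᵢ + u i.succ / (n - i)) j

variable {r u : Fin (n + 1) → ℝ}

theorem chamberCoord_zero : chamberCoord r 0 = (n + 1) * r 0 := rfl

theorem chamberCoord_succ (i : Fin n) :
    chamberCoord r i.succ = (n - i) * (r i.succ - r i.castSucc) := rfl

theorem ofChamberCoord_zero : ofChamberCoord u 0 = u 0 / (n + 1) := rfl

theorem ofChamberCoord_succ (i : Fin n) :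
    ofChamberCoord u i.succ = ofChamberCoord u i.castSucc + u i.succ / (n - i) := rfl

theorem natCast_sub_fin_val_pos (i : Fin n) : (0 : ℝ) < n - i :=
  sub_pos.mpr (Nat.cast_lt.mpr i.isLt)

theorem chamberCoord_ofChamberCoord (u : Fin (n + 1) → ℝ) :
    chamberCoord (ofChamberCoord u) = u := by
  ext i
  cases i using Fin.cases with
  | zero =>
    have hn : (n + 1 : ℝ) ≠ 0 := by positivity
    rw [chamberCoord_zero, ofChamberCoord_zero, mul_div_cancel₀ _ hn]
  | succ i =>
    rw [chamberCoord_succ, ofChamberCoord_succ, add_sub_cancel_left,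
      mul_div_cancel₀ _ (natCast_sub_fin_val_pos i).ne']

theorem ofChamberCoord_chamberCoord (r : Fin (n + 1) → ℝ) :
    ofChamberCoord (chamberCoord r) = r := by
  ext i
  induction i using Fin.induction with
  | zero =>
    have hn : (n + 1 : ℝ) ≠ 0 := by positivity
    rw [ofChamberCoord_zero, chamberCoord_zero, mul_div_cancel_left₀ _ hn]
  | succ i ih =>
    rw [ofChamberCoord_succ, ih, chamberCoord_succ,
      mul_div_cancel_left₀ _ (natCast_sub_fin_val_pos i).ne', add_sub_cancel]

theorem chamberCoord_injective : (chamberCoord (n := n)).Injective :=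
  Function.LeftInverse.injective ofChamberCoord_chamberCoord

theorem ofChamberCoord_injective : (ofChamberCoord (n := n)).Injective :=
  Function.LeftInverse.injective chamberCoord_ofChamberCoord

theorem continuous_chamberCoord : Continuous (chamberCoord (n := n)) := by
  refine continuous_pi fun i => ?_
  cases i using Fin.cases with
  | zero => simp only [chamberCoord_zero]; fun_prop
  | succ i => simp only [chamberCoord_succ]; fun_prop

theorem continuous_ofChamberCoord : Continuous (ofChamberCoord (n := n)) := by
  refine continuous_pi fun i => ?_
  induction i using Fin.induction with
  | zero => simp only [ofChamberCoord_zero]; fun_prop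
  | succ i ih => simp only [ofChamberCoord_succ]; fun_prop

-- Summation by parts.
theorem sum_chamberCoord (r : Fin (n + 1) → ℝ) : ∑ i, chamberCoord r i = ∑ i, r i := by
  have hsucc := Fin.sum_univ_succ fun i : Fin (n + 1) => (n + 1 - i : ℝ) * r i
  have hcastSucc := Fin.sum_univ_castSucc fun i : Fin (n + 1) => (n - i : ℝ) * r i
  simp only [Fin.val_zero, Fin.val_succ, Fin.val_castSucc, Fin.val_last, Nat.cast_zero,
    Nat.cast_add_one, sub_zero, sub_self, zero_mul, add_zero, add_sub_add_right_eq_sub]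
    at hsucc hcastSucc
  simp only [Fin.sum_univ_succ (chamberCoord r), chamberCoord_zero, chamberCoord_succ, mul_sub,
    Finset.sum_sub_distrib]
  rw [← add_sub_assoc, ← hsucc, ← hcastSucc, ← Finset.sum_sub_distrib]
  exact Finset.sum_congr rfl fun i _ => by ring

theorem chamberCoord_nonneg_iff : (∀ i, 0 ≤ chamberCoord r i) ↔ 0 ≤ r 0 ∧ Monotone r := by
  have hn : (0 : ℝ) < n + 1 := by positivity
  simp only [Fin.forall_fin_succ, chamberCoord_zero, chamberCoord_succ, Fin.monotone_iff_le_succ,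
    mul_nonneg_iff_of_pos_left hn, mul_nonneg_iff_of_pos_left (natCast_sub_fin_val_pos _),
    sub_nonneg]

theorem chamberCoord_zero_eq_zero_iff : chamberCoord r 0 = 0 ↔ r 0 = 0 := by
  have hn : (n + 1 : ℝ) ≠ 0 := by positivity
  rw [chamberCoord_zero, mul_eq_zero_iff_left hn]

theorem chamberCoord_succ_eq_zero_iff (i : Fin n) :
    chamberCoord r i.succ = 0 ↔ r i.castSucc = r i.succ := by
  rw [chamberCoord_succ, mul_eq_zero_iff_left (natCast_sub_fin_val_pos i).ne', sub_eq_zero, eq_comm]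

theorem exists_chamberCoord_eq_zero_iff (hr : Monotone r) :
    (∃ i, chamberCoord r i = 0) ↔ r 0 = 0 ∨ ¬ r.Injective := by
  have hinj : r.Injective ↔ ∀ i : Fin n, r i.castSucc ≠ r i.succ := by
    rw [← hr.strictMono_iff_injective, Fin.strictMono_iff_lt_succ]
    exact forall_congr' fun i => (hr i.castSucc_lt_succ.le).lt_iff_ne
  simp only [Fin.exists_fin_succ, chamberCoord_zero_eq_zero_iff, chamberCoord_succ_eq_zero_iff,
    hinj, not_forall, not_not]

end ChamberCoord

section BlockReverse

variable {m : ℕ}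

/-- The permutation of the vertices `0, …, m + 1` that fixes `0` and reverses the two blocks
`1, …, k` and `k + 1, …, m + 1`. Once the vertices of every copy `k` are relabelled in this way,
the gluing maps of the folding polytope preserve labels. -/
def blockReverse (k j : Fin (m + 2)) : Fin (m + 2) :=
  ⟨if j.val = 0 then 0 else if j ≤ k then k + 1 - j else m + 2 + k - j, by
    split_ifs <;> omega⟩

theorem blockReverse_involutive (k : Fin (m + 2)) : (blockReverse k).Involutive := by
  intro j
  ext
  simp only [blockReverse, Fin.le_def]
  split_ifs <;> omega

theorem blockReverse_zero (k : Fin (m + 2)) : blockReverse k 0 = 0 := rfl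

theorem blockReverse_castSucc_succ (k : Fin (m + 1)) :
    blockReverse k.castSucc k.succ = Fin.last (m + 1) := by
  ext
  simp only [blockReverse, Fin.le_def, Fin.val_succ, Fin.val_castSucc, Fin.val_last]
  split_ifs <;> omega

theorem blockReverse_succ_succ (k : Fin (m + 1)) : blockReverse k.succ k.succ = 1 := by
  ext
  simp [blockReverse]

theorem one_le_blockReverse_castSucc_and_le_iff (k : Fin (m + 1)) (j : Fin (m + 2)) :
    1 ≤ (blockReverse k.castSucc j : ℕ) ∧ (blockReverse k.castSucc j : ℕ) ≤ m ↔
      j ≠ 0 ∧ j ≠ k.succ := by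
  simp only [blockReverse, Fin.le_def, Fin.ext_iff, ne_eq, Fin.val_castSucc, Fin.val_succ,
    Fin.val_zero]
  grind

theorem blockReverse_succ_eq_add_one {k : Fin (m + 1)} {j : Fin (m + 2)} (h0 : j ≠ 0)
    (hk : j ≠ k.succ) : blockReverse k.succ j = blockReverse k.castSucc j + 1 := by
  have hle := ((one_le_blockReverse_castSucc_and_le_iff k j).mpr ⟨h0, hk⟩).2
  ext
  rw [Fin.val_add_one_of_lt (Fin.lt_def.mpr (Nat.lt_succ_of_le hle))]
  simp only [blockReverse, Fin.le_def, Fin.ext_iff, ne_eq, Fin.val_castSucc, Fin.val_succ,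
    Fin.val_zero] at h0 hk ⊢
  split_ifs <;> omega

theorem blockReverse_succ_eq_last_iff {k : Fin (m + 2)} (i : Fin (m + 1)) :
    blockReverse k i.succ = Fin.last (m + 1) ∧ k ≠ Fin.last (m + 1) ↔ i.castSucc = k := by
  simp only [blockReverse, Fin.ext_iff, Fin.le_def, ne_eq, Fin.val_succ, Fin.val_castSucc,
    Fin.val_last]
  grind

theorem blockReverse_succ_eq_one_iff {k : Fin (m + 2)} (i : Fin (m + 1)) :
    blockReverse k i.succ = 1 ∧ k ≠ 0 ↔ i.succ = k := by
  simp only [blockReverse, Fin.ext_iff, Fin.le_def, ne_eq, Fin.val_succ, Fin.val_one,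
    Fin.val_zero]
  grind

end BlockReverse

section InsertNth

variable {m : ℕ} {α : Type*}

theorem exists_monotone_insertNth [LinearOrder α] {t : Fin (m + 1) → α} (ht : Monotone t) (s : α) :
    ∃ k : Fin (m + 2), Monotone (k.insertNth s t : Fin (m + 2) → α) := by
  by_contra! h
  have hlt : ∀ i, t i < s := by
    intro i
    induction i using Fin.induction with
    | zero => exact not_le.mp fun hs => h 0 (Fin.insertNth_zero_monotone ht s hs)
    | succ i ih => exact not_le.mp fun hs => h _ (Fin.insertNth_monotone ht i s ih.le hs)
  exact h _ (Fin.insertNth_last_monotone ht s (hlt _).le)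

theorem cons_removeNth_eq_comp (k : Fin (m + 1)) (r : Fin (m + 1) → α) :
    (Fin.cons (r k) (k.removeNth r) : Fin (m + 1) → α) = r ∘ k.cycleRange.symm := by
  ext i
  cases i using Fin.cases <;>
    simp [Fin.removeNth, Fin.cycleRange_symm_zero, Fin.cycleRange_symm_succ]

theorem monotone_removeNth [Preorder α] {r : Fin (m + 1) → α} (hr : Monotone r) (k : Fin (m + 1)) :
    Monotone (k.removeNth r) :=
  hr.comp (Fin.strictMono_succAbove k).monotone

theorem eq_of_removeNth_eq [PartialOrder α] {r r' : Fin (m + 1) → α} (hr : Monotone r)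
    (hr' : Monotone r') {k k' : Fin (m + 1)} (hk : r k = r' k')
    (h : k.removeNth r = k'.removeNth r') : r = r' := by
  have hperm : r = r' ∘ (k.cycleRange.trans k'.cycleRange.symm) := by
    have hcons := congrArg₂ (Fin.cons (α := fun _ => α)) hk h
    rw [cons_removeNth_eq_comp, cons_removeNth_eq_comp] at hcons
    rw [Equiv.coe_trans, ← Function.comp_assoc, ← hcons, Function.comp_assoc,
      Equiv.symm_comp_self, Function.comp_id]
  exact hperm.trans (Tuple.unique_monotone (f := r')
    (σ := k.cycleRange.trans k'.cycleRange.symm) (τ := 1) (hperm ▸ hr) hr')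

theorem removeNth_castSucc_eq_removeNth_succ {r : Fin (m + 1) → α} {k : Fin m}
    (h : r k.castSucc = r k.succ) : k.castSucc.removeNth r = k.succ.removeNth r := by
  ext i
  obtain hi | rfl | hi := lt_trichotomy i k
  · simp [Fin.removeNth, hi, Fin.succAbove_of_castSucc_lt, Fin.castSucc_lt_succ_iff.mpr hi.le]
  · simpa [Fin.removeNth, Fin.succAbove_castSucc_self, Fin.succAbove_succ_self] using h.symm
  · simp [Fin.removeNth, Fin.succAbove_castSucc_of_le, hi.le, Fin.succAbove_succ_of_lt, hi]

theorem not_injective_removeNth {r : Fin (m + 1) → α} {k i j : Fin (m + 1)}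
    (hij : i ≠ j) (h : r i = r j) (hi : i ≠ k) (hj : j ≠ k) : ¬ (k.removeNth r).Injective := by
  obtain ⟨a, rfl⟩ := Fin.exists_succAbove_eq hi
  obtain ⟨b, rfl⟩ := Fin.exists_succAbove_eq hj
  exact fun hinj => hij (congrArg k.succAbove (hinj h))

theorem exists_adjacent_eq_of_not_injective_removeNth [PartialOrder α] {r : Fin (m + 1) → α}
    (hr : Monotone r) {k : Fin (m + 1)} (h : ¬ (k.removeNth r).Injective) :
    ∃ k', r k' = r k ∧ ∃ i : Fin m, r i.castSucc = r i.succ ∧ i.castSucc ≠ k' ∧ i.succ ≠ k' := by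
  obtain ⟨a, b, hab, hne⟩ := Function.not_injective_iff.mp h
  wlog hlt : a < b generalizing a b
  · exact this b a hab.symm hne.symm (hne.lt_or_gt.resolve_left hlt)
  have hpq : k.succAbove a < k.succAbove b := Fin.strictMono_succAbove k hlt
  obtain ⟨i, hi⟩ := Fin.exists_castSucc_eq.mpr (Fin.ne_last_of_lt hpq)
  have hiq : i.succ ≤ k.succAbove b := Fin.castSucc_lt_iff_succ_le.mp (hi ▸ hpq)
  replace hab : r i.castSucc = r (k.succAbove b) := hi ▸ hab
  have hadj : r i.castSucc = r i.succ :=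
    (hr i.castSucc_le_succ).antisymm (hab ▸ hr hiq)
  obtain rfl | hik := eq_or_ne i.succ k
  · exact ⟨_, hab.symm.trans hadj, i, hadj, hi ▸ hpq.ne, (Fin.succAbove_ne _ b).symm⟩
  · exact ⟨k, rfl, i, hadj, hi ▸ Fin.succAbove_ne k a, hik⟩

end InsertNth

namespace FoldingPolytope

variable {m : ℕ}

/-- The vector `0 ≤ r 0 ≤ ⋯ ≤ r (m + 1)` whose chamber coordinates are the relabelled barycentric
coordinates of the point `x` of the `k`-th copy of the simplex. The pair `(k, x)` is thought of as
this vector with its `k`-th entry marked. -/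
def sortedVector (k : Fin (m + 2)) (x : TopSimplex (m + 1)) : Fin (m + 2) → ℝ :=
  ofChamberCoord (x.1 ∘ blockReverse k)

variable {k : Fin (m + 2)} {x y : TopSimplex (m + 1)}

theorem chamberCoord_sortedVector (j : Fin (m + 2)) :
    chamberCoord (sortedVector k x) j = x.1 (blockReverse k j) :=
  congrFun (chamberCoord_ofChamberCoord _) j

theorem sortedVector_zero_eq_zero_iff : sortedVector k x 0 = 0 ↔ x.1 0 = 0 := by
  rw [← chamberCoord_zero_eq_zero_iff (r := sortedVector k x), chamberCoord_sortedVector,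
    blockReverse_zero]

theorem sortedVector_zero_nonneg_and_monotone (k : Fin (m + 2)) (x : TopSimplex (m + 1)) :
    0 ≤ sortedVector k x 0 ∧ Monotone (sortedVector k x) :=
  chamberCoord_nonneg_iff.mp fun j => chamberCoord_sortedVector j ▸ x.2.1 _

theorem sortedVector_monotone (k : Fin (m + 2)) (x : TopSimplex (m + 1)) :
    Monotone (sortedVector k x) :=
  (sortedVector_zero_nonneg_and_monotone k x).2

theorem sortedVector_nonneg (k : Fin (m + 2)) (x : TopSimplex (m + 1)) (j : Fin (m + 2)) :
    0 ≤ sortedVector k x j :=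
  (sortedVector_zero_nonneg_and_monotone k x).1.trans (sortedVector_monotone k x (Fin.zero_le j))

theorem sum_sortedVector (k : Fin (m + 2)) (x : TopSimplex (m + 1)) :
    ∑ j, sortedVector k x j = 1 := by
  rw [← sum_chamberCoord, sortedVector, chamberCoord_ofChamberCoord]
  exact ((blockReverse_involutive k).bijective.sum_comp x.1).trans x.2.2

theorem sortedVector_injective (k : Fin (m + 2)) :
    (sortedVector (m := m) k).Injective := fun _ _ h =>
  Subtype.ext ((blockReverse_involutive k).surjective.injective_comp_right
    (ofChamberCoord_injective h))

theorem exists_sortedVector_eq (k : Fin (m + 2)) {r : Fin (m + 2) → ℝ} (h0 : 0 ≤ r 0)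
    (hr : Monotone r) (hsum : ∑ j, r j = 1) : ∃ x, sortedVector k x = r := by
  refine ⟨⟨chamberCoord r ∘ blockReverse k,
    fun j => chamberCoord_nonneg_iff.mpr ⟨h0, hr⟩ (blockReverse k j), ?_⟩, ?_⟩
  · rw [← hsum, ← sum_chamberCoord r]
    exact (blockReverse_involutive k).bijective.sum_comp (chamberCoord r)
  · change ofChamberCoord ((chamberCoord r ∘ blockReverse k) ∘ blockReverse k) = r
    rw [Function.comp_assoc, (blockReverse_involutive k).comp_self,
      Function.comp_id, ofChamberCoord_chamberCoord]

theorem exists_sortedVector_eq_sortedVector (k' k : Fin (m + 2)) (x : TopSimplex (m + 1)) :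
    ∃ x', sortedVector k' x' = sortedVector k x :=
  exists_sortedVector_eq k' (sortedVector_nonneg k x 0) (sortedVector_monotone k x)
    (sum_sortedVector k x)

theorem continuous_sortedVector (k : Fin (m + 2)) : Continuous (sortedVector (m := m) k) :=
  continuous_ofChamberCoord.comp
    (continuous_pi fun j => (continuous_apply (blockReverse k j)).comp continuous_subtype_val)

theorem gluePt_iff (k : Fin (m + 1)) :
    GluePt (m + 1) x y ↔ sortedVector k.castSucc x k.castSucc = sortedVector k.castSucc x k.succ ∧
      sortedVector k.castSucc x = sortedVector k.succ y := by
  have hshift : (∀ i : Fin (m + 2), 1 ≤ (i : ℕ) → (i : ℕ) ≤ m → y.1 (i + 1) = x.1 i) ↔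
      ∀ j, j ≠ 0 → j ≠ k.succ →
        y.1 (blockReverse k.succ j) = x.1 (blockReverse k.castSucc j) := by
    rw [(blockReverse_involutive k.castSucc).surjective.forall]
    refine forall_congr' fun j => ?_
    rw [← and_imp, ← and_imp, one_le_blockReverse_castSucc_and_le_iff]
    exact forall_congr' fun hj => by rw [blockReverse_succ_eq_add_one hj.1 hj.2]
  rw [← chamberCoord_succ_eq_zero_iff, ← chamberCoord_injective.eq_iff, funext_iff]
  simp only [chamberCoord_sortedVector, blockReverse_castSucc_succ]
  refine and_congr_right fun hx => ?_
  constructor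
  · rintro ⟨hy, h0, h⟩ j
    obtain rfl | hj0 := eq_or_ne j 0
    · exact h0.symm
    obtain rfl | hjk := eq_or_ne j k.succ
    · rw [blockReverse_castSucc_succ, blockReverse_succ_succ, hx, hy]
    · exact (hshift.mp h j hj0 hjk).symm
  · intro h
    have hy := h k.succ
    rw [blockReverse_castSucc_succ, blockReverse_succ_succ, hx] at hy
    exact ⟨hy.symm, (h 0).symm, hshift.mpr fun j _ _ => (h j).symm⟩

theorem glueRel_castSucc_succ {k : Fin (m + 1)}
    (hk : sortedVector k.castSucc x k.castSucc = sortedVector k.castSucc x k.succ)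
    (h : sortedVector k.castSucc x = sortedVector k.succ y) :
    GlueRel (m + 1) (k.castSucc, x) (k.succ, y) :=
  Or.inl ⟨by simp, (gluePt_iff k).mpr ⟨hk, h⟩⟩

theorem mk_eq_mk_of_le {k k' : Fin (m + 2)} (hkk' : k ≤ k')
    (hk : sortedVector k x k = sortedVector k x k')
    (h : sortedVector k x = sortedVector k' y) :
    (Quot.mk _ (k, x) : FoldingPolytope (m + 1)) = Quot.mk _ (k', y) := by
  induction k' using Fin.induction generalizing y with
  | zero =>
    obtain rfl := Fin.le_zero_iff.mp hkk'
    rw [sortedVector_injective 0 h]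
  | succ i ih =>
    obtain rfl | hki := hkk'.eq_or_lt
    · rw [sortedVector_injective _ h]
    have hki : k ≤ i.castSucc := Fin.le_castSucc_iff.mpr hki
    have hmono := sortedVector_monotone k x
    have hi : sortedVector k x k = sortedVector k x i.castSucc :=
      (hmono hki).antisymm (hk ▸ hmono i.castSucc_le_succ)
    obtain ⟨z, hz⟩ := exists_sortedVector_eq_sortedVector i.castSucc k x
    rw [ih hki hi hz.symm]
    exact Quot.sound (glueRel_castSucc_succ (by rw [hz, ← hi, hk]) (hz.trans h))

theorem mk_eq_mk {k k' : Fin (m + 2)} (hk : sortedVector k x k = sortedVector k' y k')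
    (h : sortedVector k x = sortedVector k' y) :
    (Quot.mk _ (k, x) : FoldingPolytope (m + 1)) = Quot.mk _ (k', y) := by
  obtain hkk' | hkk' := le_total k k'
  · exact mk_eq_mk_of_le hkk' (by rw [hk, h]) h
  · exact (mk_eq_mk_of_le hkk' (by rw [← hk, h]) h.symm).symm

theorem exists_mk_eq_mk {k k' : Fin (m + 2)} (h : sortedVector k x k' = sortedVector k x k) :
    ∃ x', (Quot.mk _ (k', x') : FoldingPolytope (m + 1)) = Quot.mk _ (k, x) ∧
      sortedVector k' x' = sortedVector k x := by
  obtain ⟨x', hx'⟩ := exists_sortedVector_eq_sortedVector k' k x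
  exact ⟨x', mk_eq_mk (by rw [hx', h]) hx', hx'⟩

/-- The point `(k, x)` of the disjoint union of simplices, mapped to the simplex with coordinates
`s` and the chamber coordinates of `t`, where `s` is the marked entry of the sorted vector of
`(k, x)` and `t` collects the other entries. -/
def foldMap (p : Fin (m + 2) × TopSimplex (m + 1)) : TopSimplex (m + 1) :=
  ⟨Fin.cons (sortedVector p.1 p.2 p.1) (chamberCoord (p.1.removeNth (sortedVector p.1 p.2))), by
    have hnonneg := sortedVector_nonneg p.1 p.2
    have hmono := monotone_removeNth (sortedVector_monotone p.1 p.2) p.1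
    exact Fin.cases (hnonneg _) (chamberCoord_nonneg_iff.mpr ⟨hnonneg _, hmono⟩), by
    rw [Fin.sum_cons, sum_chamberCoord, ← sum_sortedVector p.1 p.2,
      Fin.sum_univ_succAbove _ p.1]
    rfl⟩

theorem foldMap_zero : (foldMap (k, x)).1 0 = sortedVector k x k := rfl

theorem foldMap_succ (i : Fin (m + 1)) :
    (foldMap (k, x)).1 i.succ = chamberCoord (k.removeNth (sortedVector k x)) i := rfl

theorem foldMap_eq_of_gluePt {k k' : Fin (m + 2)} (hk : (k : ℕ) + 1 = k')
    (h : GluePt (m + 1) x y) : foldMap (k, x) = foldMap (k', y) := by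
  have hlt : k < k' := Fin.lt_def.mpr (hk ▸ Nat.lt_succ_self _)
  obtain ⟨i, rfl⟩ := Fin.exists_castSucc_eq.mpr (Fin.ne_last_of_lt hlt)
  obtain rfl : i.succ = k' := Fin.ext hk
  obtain ⟨hi, hxy⟩ := (gluePt_iff i).mp h
  apply Subtype.ext
  simp only [foldMap, ← hxy, ← hi, removeNth_castSucc_eq_removeNth_succ hi]

theorem foldMap_eq_of_glueRel {p q : Fin (m + 2) × TopSimplex (m + 1)}
    (h : GlueRel (m + 1) p q) : foldMap p = foldMap q := by
  obtain ⟨hk, hpq⟩ | ⟨hk, hqp⟩ := h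
  · exact foldMap_eq_of_gluePt hk hpq
  · exact (foldMap_eq_of_gluePt hk hqp).symm

theorem sortedVector_eq_of_foldMap_eq {k k' : Fin (m + 2)} (h : foldMap (k, x) = foldMap (k', y)) :
    sortedVector k x = sortedVector k' y ∧ sortedVector k x k = sortedVector k' y k' := by
  obtain ⟨hmark, hrest⟩ := Fin.cons_injective2 (α := fun _ => ℝ) (congrArg Subtype.val h)
  exact ⟨eq_of_removeNth_eq (sortedVector_monotone k x) (sortedVector_monotone k' y) hmark
    (chamberCoord_injective hrest), hmark⟩

theorem foldMap_surjective : (foldMap (m := m)).Surjective := by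
  intro w
  set s := w.1 0
  set t := ofChamberCoord (Fin.tail w.1)
  have htail : chamberCoord t = Fin.tail w.1 := chamberCoord_ofChamberCoord _
  obtain ⟨ht0, htmono⟩ := chamberCoord_nonneg_iff.mp fun i =>
    (w.2.1 i.succ).trans_eq (congrFun htail i).symm
  obtain ⟨k, hk⟩ := exists_monotone_insertNth htmono s
  have hnonneg : ∀ j, 0 ≤ (k.insertNth s t : Fin (m + 2) → ℝ) j := by
    simp only [Fin.forall_iff_succAbove k, Fin.insertNth_apply_same, Fin.insertNth_apply_succAbove]
    exact ⟨w.2.1 0, fun i => ht0.trans (htmono (Fin.zero_le i))⟩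
  obtain ⟨x, hx⟩ := exists_sortedVector_eq k (hnonneg 0) hk (by
    rw [Fin.sum_univ_succAbove _ k]
    simp only [Fin.insertNth_apply_same, Fin.insertNth_apply_succAbove]
    rw [← sum_chamberCoord, htail]
    exact (Fin.sum_univ_succ w.1).symm.trans w.2.2)
  refine ⟨(k, x), Subtype.ext ?_⟩
  simp only [foldMap, hx, Fin.insertNth_apply_same, Fin.removeNth_insertNth, htail]
  exact Fin.cons_self_tail w.1

theorem continuous_foldMap : Continuous (foldMap (m := m)) := by
  refine continuous_prod_of_discrete_left.mpr fun k => Continuous.subtype_mk ?_ _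
  have hr := continuous_sortedVector (m := m) k
  refine continuous_pi (Fin.cases ((continuous_apply k).comp hr) fun i => ?_)
  exact (continuous_apply i).comp (continuous_chamberCoord.comp
    (continuous_pi fun j => (continuous_apply (k.succAbove j)).comp hr))

instance (n : ℕ) : CompactSpace (FoldingPolytope n) :=
  Quot.compactSpace

/-- The map induced by `foldMap` on the folding polytope. -/
def toSimplex : FoldingPolytope (m + 1) → TopSimplex (m + 1) :=
  Quot.lift foldMap fun _ _ => foldMap_eq_of_glueRel

theorem toSimplex_bijective : (toSimplex (m := m)).Bijective := by
  constructor
  · rintro ⟨k, x⟩ ⟨k', y⟩ h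
    obtain ⟨hxy, hk⟩ := sortedVector_eq_of_foldMap_eq h
    exact mk_eq_mk hk hxy
  · intro w
    obtain ⟨p, rfl⟩ := foldMap_surjective w
    exact ⟨Quot.mk _ p, rfl⟩

/-- The folding polytope is a simplex. -/
def homeomorphSimplex : FoldingPolytope (m + 1) ≃ₜ TopSimplex (m + 1) :=
  (continuous_quot_lift _ continuous_foldMap : Continuous toSimplex).homeoOfEquivCompactToT2
    (f := Equiv.ofBijective _ toSimplex_bijective)

theorem foldMap_one_eq_zero_iff :
    (foldMap (k, x)).1 1 = 0 ↔ sortedVector k x (k.succAbove 0) = 0 := by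
  rw [← Fin.succ_zero_eq_one, foldMap_succ, chamberCoord_zero_eq_zero_iff, Fin.removeNth_apply]

theorem exists_foldMap_eq_zero_iff :
    (∃ j, (foldMap (k, x)).1 j = 0) ↔ sortedVector k x k = 0 ∨
      sortedVector k x (k.succAbove 0) = 0 ∨ ¬ (k.removeNth (sortedVector k x)).Injective := by
  rw [Fin.exists_fin_succ, foldMap_zero]
  simp only [foldMap_succ]
  rw [exists_chamberCoord_eq_zero_iff (monotone_removeNth (sortedVector_monotone k x) k),
    Fin.removeNth_apply]

theorem sortedVector_zero_eq_zero_of_eq_zero {j : Fin (m + 2)} (h : sortedVector k x j = 0) :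
    sortedVector k x 0 = 0 :=
  (h ▸ sortedVector_monotone k x (Fin.zero_le j)).antisymm (sortedVector_nonneg k x 0)

theorem exists_free_facet_iff :
    (∃ j, x.1 j = 0 ∧ ¬(j = Fin.last (m + 1) ∧ k ≠ Fin.last (m + 1)) ∧ ¬(j = 1 ∧ k ≠ 0)) ↔
      sortedVector k x 0 = 0 ∨ ∃ i : Fin (m + 1),
        sortedVector k x i.castSucc = sortedVector k x i.succ ∧ i.castSucc ≠ k ∧ i.succ ≠ k := by
  rw [(blockReverse_involutive k).surjective.exists, Fin.exists_fin_succ]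
  refine or_congr ?_ (exists_congr fun i => ?_)
  · simp [blockReverse_zero, sortedVector_zero_eq_zero_iff]
  · rw [blockReverse_succ_eq_last_iff, blockReverse_succ_eq_one_iff, ← chamberCoord_sortedVector,
      chamberCoord_succ_eq_zero_iff]

theorem mk_mem_foldingBoundary_of_eq {k' : Fin (m + 2)}
    (hk : sortedVector k x k' = sortedVector k x k)
    (h : sortedVector k x 0 = 0 ∨ ∃ i : Fin (m + 1),
      sortedVector k x i.castSucc = sortedVector k x i.succ ∧ i.castSucc ≠ k' ∧ i.succ ≠ k') :
    Quot.mk _ (k, x) ∈ foldingBoundary (m + 1) := by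
  obtain ⟨x', hmk, hx'⟩ := exists_mk_eq_mk hk
  exact ⟨(k', x'), exists_free_facet_iff.mpr (hx'.symm ▸ h), hmk⟩

theorem mem_foldingBoundary_iff {p : FoldingPolytope (m + 1)} :
    p ∈ foldingBoundary (m + 1) ↔ ∃ j, (homeomorphSimplex p).1 j = 0 := by
  constructor
  · rintro ⟨⟨k, x⟩, hx, rfl⟩
    refine exists_foldMap_eq_zero_iff.mpr ?_
    obtain h0 | ⟨i, hi, hik, hik'⟩ := exists_free_facet_iff.mp hx
    · obtain rfl | hk := eq_or_ne k 0
      · exact Or.inl h0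
      · exact Or.inr (Or.inl (by rwa [Fin.succAbove_ne_zero_zero hk]))
    · exact Or.inr (Or.inr (not_injective_removeNth i.castSucc_lt_succ.ne hi hik hik'))
  · obtain ⟨k, x⟩ := p
    intro h
    obtain h0 | h0 | hinj := exists_foldMap_eq_zero_iff.mp h
    · exact mk_mem_foldingBoundary_of_eq rfl (Or.inl (sortedVector_zero_eq_zero_of_eq_zero h0))
    · exact mk_mem_foldingBoundary_of_eq rfl (Or.inl (sortedVector_zero_eq_zero_of_eq_zero h0))
    · obtain ⟨k', hk', hadj⟩ :=
        exists_adjacent_eq_of_not_injective_removeNth (sortedVector_monotone k x) hinj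
      exact mk_mem_foldingBoundary_of_eq hk' (Or.inr hadj)

theorem mem_foldingEdge_iff {p : FoldingPolytope (m + 1)} :
    p ∈ foldingEdge (m + 1) ↔ (homeomorphSimplex p).1 1 = 0 := by
  constructor
  · rintro ⟨⟨k, x⟩, ⟨hk, hx⟩, rfl⟩
    refine foldMap_one_eq_zero_iff.mpr ?_
    rw [Fin.succAbove_ne_zero_zero hk]
    exact sortedVector_zero_eq_zero_iff.mpr hx
  · obtain ⟨k, x⟩ := p
    intro h
    replace h := foldMap_one_eq_zero_iff.mp h
    have h0 := sortedVector_zero_eq_zero_of_eq_zero h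
    obtain rfl | hk := eq_or_ne k 0
    · obtain ⟨x', hmk, hx'⟩ := exists_mk_eq_mk (h.trans h0.symm)
      exact ⟨((0 : Fin (m + 2)).succAbove 0, x'),
        ⟨(0 : Fin (m + 2)).succAbove_ne 0, sortedVector_zero_eq_zero_iff.mp (hx' ▸ h0)⟩, hmk⟩
    · exact ⟨(k, x), ⟨hk, sortedVector_zero_eq_zero_iff.mp h0⟩, rfl⟩

end FoldingPolytope

section RadialRescale

variable {E F : Type*}

/-- Positive homogeneity of degree one. -/
def PosHomogeneous [SMul ℝ E] [SMul ℝ F] (f : E → F) : Prop :=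
  ∀ ⦃c : ℝ⦄, 0 < c → ∀ x, f (c • x) = c • f x

variable [AddCommGroup E] [Module ℝ E]

theorem PosHomogeneous.map_zero [AddCommGroup F] [Module ℝ F] {f : E → F}
    (hf : PosHomogeneous f) : f 0 = 0 := by
  have h := hf two_pos 0
  rwa [smul_zero, two_smul, left_eq_add] at h

variable [NormedAddCommGroup F] [NormedSpace ℝ F] {f : E → F} {g : E → ℝ}

/-- The map with the same direction as `f` and with the gauge `g` as its norm. Where `f` vanishes,
so does this map, by the convention `g x / 0 = 0`. -/
def radialRescale (f : E → F) (g : E → ℝ) (x : E) : F :=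
  (g x / ‖f x‖) • f x

theorem norm_radialRescale (hf : PosHomogeneous f) (hfi : f.Injective) (hg : PosHomogeneous g)
    (hpos : ∀ x ≠ 0, 0 < g x) (x : E) : ‖radialRescale f g x‖ = g x := by
  obtain rfl | hx := eq_or_ne x 0
  · simp [radialRescale, hf.map_zero, hg.map_zero]
  · have hfx : ‖f x‖ ≠ 0 := norm_ne_zero_iff.mpr (hf.map_zero ▸ hfi.ne hx)
    rw [radialRescale, norm_smul, norm_div, norm_norm, Real.norm_of_nonneg (hpos x hx).le,
      div_mul_cancel₀ _ hfx]

theorem radialRescale_injective (hf : PosHomogeneous f) (hfi : f.Injective)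
    (hg : PosHomogeneous g) (hpos : ∀ x ≠ 0, 0 < g x) : (radialRescale f g).Injective := by
  intro x y hxy
  have hgxy : g x = g y := by
    rw [← norm_radialRescale hf hfi hg hpos x, hxy, norm_radialRescale hf hfi hg hpos y]
  have zero_of : ∀ z, g z = 0 → z = 0 := fun z hz => by_contra fun h => (hpos z h).ne' hz
  obtain rfl | hx := eq_or_ne x 0
  · exact (zero_of y (hgxy ▸ hg.map_zero)).symm
  have hy : y ≠ 0 := by
    rintro rfl
    exact hx (zero_of x (hgxy.trans hg.map_zero))
  have coef_pos : ∀ z ≠ 0, 0 < g z / ‖f z‖ := fun z hz =>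
    div_pos (hpos z hz) (norm_pos_iff.mpr (hf.map_zero ▸ hfi.ne hz))
  have hsmul : (g x / ‖f x‖) • x = (g y / ‖f y‖) • y :=
    hfi (by rw [hf (coef_pos x hx), hf (coef_pos y hy)]; exact hxy)
  have hcoef : g x / ‖f x‖ = g y / ‖f y‖ := by
    have h := congrArg g hsmul
    rw [hg (coef_pos x hx), hg (coef_pos y hy), hgxy] at h
    rw [hgxy]
    exact smul_left_injective ℝ (hpos y hy).ne' h
  rw [hcoef] at hsmul
  exact smul_right_injective E (coef_pos y hy).ne' hsmul

theorem radialRescale_surjective (hf : PosHomogeneous f) (hfs : f.Surjective)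
    (hg : PosHomogeneous g) (hpos : ∀ x ≠ 0, 0 < g x) : (radialRescale f g).Surjective := by
  intro y
  obtain rfl | hy := eq_or_ne y 0
  · exact ⟨0, by simp [radialRescale, hf.map_zero]⟩
  obtain ⟨x, rfl⟩ := hfs y
  have hgx : 0 < g x := hpos x fun h => hy (h ▸ hf.map_zero)
  have hfx : 0 < ‖f x‖ := norm_pos_iff.mpr hy
  have hc : 0 < ‖f x‖ / g x := div_pos hfx hgx
  refine ⟨(‖f x‖ / g x) • x, ?_⟩
  rw [radialRescale, hf hc, hg hc, norm_smul, Real.norm_of_nonneg hc.le, smul_smul, smul_eq_mul]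
  convert one_smul ℝ (f x)
  field_simp

theorem continuous_radialRescale [TopologicalSpace E] (hf : PosHomogeneous f)
    (hfi : f.Injective) (hfc : Continuous f) (hg : PosHomogeneous g) (hgc : Continuous g)
    (hpos : ∀ x ≠ 0, 0 < g x) : Continuous (radialRescale f g) := by
  refine continuous_iff_continuousAt.mpr fun x => ?_
  obtain rfl | hx := eq_or_ne x 0
  · rw [ContinuousAt, show radialRescale f g 0 = 0 by simp [radialRescale, hf.map_zero],
      tendsto_zero_iff_norm_tendsto_zero]
    simpa only [norm_radialRescale hf hfi hg hpos, hg.map_zero] using hgc.tendsto 0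
  · have hfx : ‖f x‖ ≠ 0 := norm_ne_zero_iff.mpr (hf.map_zero ▸ hfi.ne hx)
    exact (hgc.continuousAt.div hfc.norm.continuousAt hfx).smul hfc.continuousAt

end RadialRescale

section IInf

variable {ι : Type*}

theorem posHomogeneous_iInf : PosHomogeneous fun x : ι → ℝ => ⨅ i, x i :=
  fun _ hc x => (Real.mul_iInf_of_nonneg hc.le x).symm

variable [Finite ι] [Nonempty ι]

theorem continuous_iInf_apply : Continuous fun x : ι → ℝ => ⨅ i, x i := by
  cases nonempty_fintype ι
  simp_rw [← Finset.inf'_univ_eq_ciInf]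
  exact Continuous.finset_inf'_apply _ fun i _ => continuous_apply i

theorem iInf_add_const (x : ι → ℝ) (c : ℝ) : ⨅ i, (x i + c) = (⨅ i, x i) + c :=
  (ciInf_add (Set.finite_range x).bddBelow c).symm

theorem le_iInf_iff_forall_le {x : ι → ℝ} {c : ℝ} : c ≤ ⨅ i, x i ↔ ∀ i, c ≤ x i :=
  le_ciInf_iff (Set.finite_range x).bddBelow

theorem lt_iInf_iff_forall_lt {x : ι → ℝ} {c : ℝ} : c < ⨅ i, x i ↔ ∀ i, c < x i := by
  refine ⟨fun h i => h.trans_le (le_iInf_iff_forall_le.mp le_rfl i), fun h => ?_⟩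
  obtain ⟨i, hi⟩ := exists_eq_ciInf_of_finite (f := x)
  exact hi ▸ h i

end IInf

section OrthantToHalfSpace

variable {ι : Type*} [DecidableEq ι] (i₀ : ι)

/-- A piecewise linear homeomorphism of `ι → ℝ` carrying the closed positive orthant to the
half-space where the coordinate `i₀` is nonnegative. It records a line parallel to the diagonal by
the differences of its coordinates, and a point of that line by its least coordinate. -/
def orthantToHalfSpace (x : ι → ℝ) : ι → ℝ :=
  Function.update (fun i => x i - x i₀) i₀ (⨅ i, x i)

theorem posHomogeneous_orthantToHalfSpace : PosHomogeneous (orthantToHalfSpace i₀) := by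
  intro c hc x
  ext i
  obtain rfl | hi := eq_or_ne i i₀
  · simpa [orthantToHalfSpace] using posHomogeneous_iInf hc x
  · simp [orthantToHalfSpace, hi, mul_sub]

variable [Finite ι]

theorem orthantToHalfSpace_nonneg_iff {x : ι → ℝ} :
    0 ≤ orthantToHalfSpace i₀ x i₀ ↔ ∀ i, 0 ≤ x i := by
  have : Nonempty ι := ⟨i₀⟩
  rw [orthantToHalfSpace, Function.update_self, le_iInf_iff_forall_le]

theorem continuous_orthantToHalfSpace : Continuous (orthantToHalfSpace i₀) :=
  have : Nonempty ι := ⟨i₀⟩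
  Continuous.update (by fun_prop) i₀ continuous_iInf_apply

theorem orthantToHalfSpace_injective : (orthantToHalfSpace i₀).Injective := by
  have : Nonempty ι := ⟨i₀⟩
  intro x y hxy
  have hsub : ∀ i, x i = y i + (x i₀ - y i₀) := by
    intro i
    obtain rfl | hi := eq_or_ne i i₀
    · ring
    · have h := congrFun hxy i
      simp only [orthantToHalfSpace, Function.update_of_ne hi] at h
      linarith
  have hinf : ⨅ i, x i = ⨅ i, y i := by
    simpa [orthantToHalfSpace] using congrFun hxy i₀
  have hdiff : x i₀ - y i₀ = 0 := by
    simpa [hinf] using (congrArg iInf (funext hsub)).trans (iInf_add_const y _)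
  ext i
  rw [hsub i, hdiff, add_zero]

theorem orthantToHalfSpace_surjective : (orthantToHalfSpace i₀).Surjective := by
  have : Nonempty ι := ⟨i₀⟩
  intro y
  refine ⟨fun i => Function.update y i₀ 0 i + (y i₀ - ⨅ i, Function.update y i₀ 0 i), ?_⟩
  ext i
  obtain rfl | hi := eq_or_ne i i₀
  · simp [orthantToHalfSpace, iInf_add_const]
  · simp [orthantToHalfSpace, hi]

end OrthantToHalfSpace

section SimplexGauge

variable {ι : Type*} [Fintype ι]

/-- The gauge of the simplex cut out by `∑ i, x i ≤ 1` and by the inequalities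
`∑ i, x i - 2 * card ι * x j ≤ 1`. The facet `∑ i, x i = 1` of this simplex, seen from the origin,
fills exactly the positive orthant. -/
def simplexGauge (x : ι → ℝ) : ℝ :=
  max (∑ i, x i) (∑ i, x i - 2 * Fintype.card ι * ⨅ i, x i)

theorem posHomogeneous_simplexGauge : PosHomogeneous (simplexGauge (ι := ι)) := by
  intro c hc x
  have hinf : ⨅ i, (c • x) i = c • ⨅ i, x i := posHomogeneous_iInf hc x
  have hsum : ∑ i, (c • x) i = c • ∑ i, x i := by simp [Finset.mul_sum]
  rw [simplexGauge, simplexGauge, hinf, hsum, smul_eq_mul, smul_eq_mul, smul_eq_mul,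
    mul_max_of_nonneg _ _ hc.le]
  ring_nf

variable [Nonempty ι]

theorem continuous_simplexGauge : Continuous (simplexGauge (ι := ι)) := by
  have hinf := continuous_iInf_apply (ι := ι)
  unfold simplexGauge
  fun_prop

theorem simplexGauge_pos {x : ι → ℝ} (hx : x ≠ 0) : 0 < simplexGauge x := by
  by_contra! h
  obtain ⟨hsum, hinf⟩ := max_le_iff.mp h
  have hcard : 0 < (Fintype.card ι : ℝ) := Nat.cast_pos.mpr Fintype.card_pos
  have hmean : Fintype.card ι * ⨅ i, x i ≤ ∑ i, x i := by
    simpa using Finset.card_nsmul_le_sum Finset.univ x _ fun i _ =>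
      le_iInf_iff_forall_le.mp le_rfl i
  have hnonneg : ∀ i, 0 ≤ x i :=
    le_iInf_iff_forall_le.mp (nonneg_of_mul_nonneg_right (by linarith) hcard)
  refine hx (funext fun i => ?_)
  exact (Finset.sum_eq_zero_iff_of_nonneg fun i _ => hnonneg i).mp
    (hsum.antisymm (Finset.sum_nonneg fun i _ => hnonneg i)) i (Finset.mem_univ i)

theorem simplexGauge_le_one_iff {x : ι → ℝ} :
    simplexGauge x ≤ 1 ↔ ∑ i, x i ≤ 1 ∧ ∀ i, ∑ i, x i - 2 * Fintype.card ι * x i ≤ 1 := by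
  have hcard : 0 < 2 * (Fintype.card ι : ℝ) := by have := Fintype.card_pos (α := ι); positivity
  simp only [simplexGauge, max_le_iff, sub_le_comm, ← div_le_iff₀' hcard, le_iInf_iff_forall_le]

theorem simplexGauge_lt_one_iff {x : ι → ℝ} :
    simplexGauge x < 1 ↔ ∑ i, x i < 1 ∧ ∀ i, ∑ i, x i - 2 * Fintype.card ι * x i < 1 := by
  have hcard : 0 < 2 * (Fintype.card ι : ℝ) := by have := Fintype.card_pos (α := ι); positivity
  simp only [simplexGauge, max_lt_iff, sub_lt_comm, ← div_lt_iff₀' hcard, lt_iInf_iff_forall_lt]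

end SimplexGauge

section FacetCoord

variable {m : ℕ} (j : Fin (m + 2))

/-- Affine coordinates on the hyperplane `∑ i, w i = 1`, centred at a point from which the facet
`w j = 0` of the standard simplex is seen as the positive orthant. -/
def facetCoord (w : Fin (m + 2) → ℝ) (i : Fin (m + 1)) : ℝ :=
  w (j.succAbove i) - w j / (m + 1)

variable {j} {w : Fin (m + 2) → ℝ}

theorem sum_facetCoord (hw : ∑ i, w i = 1) : ∑ i, facetCoord j w i = 1 - 2 * w j := by
  have hm : (m + 1 : ℝ) ≠ 0 := by positivity
  rw [Fin.sum_univ_succAbove w j] at hw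
  simp only [facetCoord, Finset.sum_sub_distrib, Finset.sum_const, Finset.card_univ,
    Fintype.card_fin, nsmul_eq_mul, Nat.cast_add_one, mul_div_cancel₀ _ hm]
  linarith

theorem one_sub_two_mul_sub_facetCoord (i : Fin (m + 1)) :
    1 - 2 * w j - 2 * (m + 1) * facetCoord j w i = 1 - 2 * (m + 1) * w (j.succAbove i) := by
  rw [facetCoord]
  field_simp
  ring

theorem simplexGauge_facetCoord_le_one_iff (hw : ∑ i, w i = 1) :
    simplexGauge (facetCoord j w) ≤ 1 ↔ ∀ i, 0 ≤ w i := by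
  have hm : (0 : ℝ) < 2 * (m + 1) := by positivity
  simp [simplexGauge_le_one_iff, sum_facetCoord hw, one_sub_two_mul_sub_facetCoord,
    Fin.forall_iff_succAbove j, mul_nonneg_iff_of_pos_left hm]

theorem simplexGauge_facetCoord_lt_one_iff (hw : ∑ i, w i = 1) :
    simplexGauge (facetCoord j w) < 1 ↔ ∀ i, 0 < w i := by
  have hm : (0 : ℝ) < 2 * (m + 1) := by positivity
  simp [simplexGauge_lt_one_iff, sum_facetCoord hw, one_sub_two_mul_sub_facetCoord,
    Fin.forall_iff_succAbove j, mul_pos_iff_of_pos_left hm]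

theorem exists_facetCoord_eq (x : Fin (m + 1) → ℝ) :
    ∃ w, ∑ i, w i = 1 ∧ facetCoord j w = x := by
  set a : ℝ := (1 - ∑ i, x i) / 2 with ha
  have hm : (m + 1 : ℝ) ≠ 0 := by positivity
  refine ⟨j.insertNth a fun i => x i + a / (m + 1), ?_, ?_⟩
  · simp only [Fin.sum_univ_succAbove _ j, Fin.insertNth_apply_same, Fin.insertNth_apply_succAbove,
      Finset.sum_add_distrib, Finset.sum_const, Finset.card_univ, Fintype.card_fin, nsmul_eq_mul,
      Nat.cast_add_one, mul_div_cancel₀ _ hm]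
    linarith
  · ext i
    simp [facetCoord]

theorem facetCoord_injOn : Set.InjOn (facetCoord j) {w | ∑ i, w i = 1} := by
  intro w hw w' hw' h
  have hj : w j = w' j := by
    have := sum_facetCoord (j := j) hw
    rw [h, sum_facetCoord hw'] at this
    linarith
  ext i
  obtain rfl | ⟨i, rfl⟩ := j.eq_self_or_eq_succAbove i
  · exact hj
  · simpa [facetCoord, hj] using congrFun h i

end FacetCoord

section GaugeToNorm

variable {ι : Type*} [DecidableEq ι] (i₀ : ι)

theorem posHomogeneous_toLp_orthantToHalfSpace :
    PosHomogeneous fun x : ι → ℝ => WithLp.toLp 2 (orthantToHalfSpace i₀ x) :=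
  fun _ hc x => congrArg (WithLp.toLp 2) (posHomogeneous_orthantToHalfSpace i₀ hc x)

theorem toLp_orthantToHalfSpace_injective [Finite ι] :
    Function.Injective fun x : ι → ℝ => WithLp.toLp 2 (orthantToHalfSpace i₀ x) :=
  (WithLp.toLp_injective 2).comp (orthantToHalfSpace_injective i₀)

variable [Fintype ι]

/-- A homeomorphism of `ℝ^ι` with Euclidean space carrying the simplex `simplexGauge ≤ 1` to the
unit ball, and the positive orthant to a half-space. -/
def gaugeToNorm : (ι → ℝ) → EuclideanSpace ℝ ι :=
  radialRescale (fun x => WithLp.toLp 2 (orthantToHalfSpace i₀ x)) simplexGauge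

theorem norm_gaugeToNorm (x : ι → ℝ) : ‖gaugeToNorm i₀ x‖ = simplexGauge x :=
  have : Nonempty ι := ⟨i₀⟩
  norm_radialRescale (posHomogeneous_toLp_orthantToHalfSpace i₀)
    (toLp_orthantToHalfSpace_injective i₀) posHomogeneous_simplexGauge
    (fun _ => simplexGauge_pos) x

theorem continuous_gaugeToNorm : Continuous (gaugeToNorm i₀) :=
  have : Nonempty ι := ⟨i₀⟩
  continuous_radialRescale (posHomogeneous_toLp_orthantToHalfSpace i₀)
    (toLp_orthantToHalfSpace_injective i₀)
    ((PiLp.continuous_toLp 2 _).comp (continuous_orthantToHalfSpace i₀))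
    posHomogeneous_simplexGauge continuous_simplexGauge fun _ => simplexGauge_pos

theorem gaugeToNorm_bijective : (gaugeToNorm i₀).Bijective :=
  have : Nonempty ι := ⟨i₀⟩
  have hf := posHomogeneous_toLp_orthantToHalfSpace i₀
  ⟨radialRescale_injective hf (toLp_orthantToHalfSpace_injective i₀) posHomogeneous_simplexGauge
      fun _ => simplexGauge_pos,
    radialRescale_surjective hf
      ((WithLp.toLp_surjective 2).comp (orthantToHalfSpace_surjective i₀))
      posHomogeneous_simplexGauge fun _ => simplexGauge_pos⟩

theorem gaugeToNorm_nonneg_iff {x : ι → ℝ} : 0 ≤ gaugeToNorm i₀ x i₀ ↔ ∀ i, 0 ≤ x i := by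
  have : Nonempty ι := ⟨i₀⟩
  have hf := posHomogeneous_toLp_orthantToHalfSpace i₀
  obtain rfl | hx := eq_or_ne x 0
  · simp [gaugeToNorm, radialRescale, hf.map_zero]
  have hfx : WithLp.toLp 2 (orthantToHalfSpace i₀ x) ≠ 0 := fun h =>
    hx (toLp_orthantToHalfSpace_injective i₀ (h.trans hf.map_zero.symm))
  rw [gaugeToNorm, radialRescale, PiLp.smul_apply, smul_eq_mul,
    mul_nonneg_iff_of_pos_left (div_pos (simplexGauge_pos hx) (norm_pos_iff.mpr hfx)),
    orthantToHalfSpace_nonneg_iff]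

end GaugeToNorm

namespace TopSimplex

variable {m : ℕ} (j : Fin (m + 2)) (i₀ : Fin (m + 1))

/-- The map from the simplex to the ball obtained by viewing the simplex from a point for which
the facet `w j = 0` fills the positive orthant. -/
def toBall (w : TopSimplex (m + 1)) :
    Metric.closedBall (0 : EuclideanSpace ℝ (Fin (m + 1))) 1 :=
  ⟨gaugeToNorm i₀ (facetCoord j w.1), by
    rw [mem_closedBall_zero_iff, norm_gaugeToNorm,
      simplexGauge_facetCoord_le_one_iff w.2.2]
    exact w.2.1⟩

theorem continuous_toBall : Continuous (toBall j i₀) := by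
  have hcoord : Continuous (facetCoord j) := by
    unfold facetCoord
    fun_prop
  exact ((continuous_gaugeToNorm i₀).comp (hcoord.comp continuous_subtype_val)).subtype_mk _

theorem toBall_bijective : (toBall j i₀).Bijective := by
  constructor
  · intro w w' h
    exact Subtype.ext (facetCoord_injOn w.2.2 w'.2.2
      ((gaugeToNorm_bijective i₀).injective (congrArg Subtype.val h)))
  · rintro ⟨y, hy⟩
    obtain ⟨x, rfl⟩ := (gaugeToNorm_bijective i₀).surjective y
    obtain ⟨w, hw, rfl⟩ := exists_facetCoord_eq (j := j) x
    rw [mem_closedBall_zero_iff, norm_gaugeToNorm, simplexGauge_facetCoord_le_one_iff hw] at hy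
    exact ⟨⟨w, hy, hw⟩, rfl⟩

variable {j i₀}

theorem norm_toBall_eq_one_iff {w : TopSimplex (m + 1)} :
    ‖(toBall j i₀ w).1‖ = 1 ↔ ∃ i, w.1 i = 0 := by
  have hle := (simplexGauge_facetCoord_le_one_iff (j := j) w.2.2).mpr w.2.1
  rw [toBall, norm_gaugeToNorm, ← not_iff_not, ← ne_eq, ← hle.lt_iff_ne,
    simplexGauge_facetCoord_lt_one_iff w.2.2, not_exists]
  exact forall_congr' fun i => (w.2.1 i).lt_iff_ne'

theorem norm_toBall_eq_one_and_nonneg_iff {w : TopSimplex (m + 1)} :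
    ‖(toBall j i₀ w).1‖ = 1 ∧ 0 ≤ (toBall j i₀ w).1 i₀ ↔ w.1 j = 0 := by
  rw [norm_toBall_eq_one_iff, toBall, gaugeToNorm_nonneg_iff]
  constructor
  · rintro ⟨⟨i, hi⟩, hnonneg⟩
    obtain rfl | ⟨i, rfl⟩ := j.eq_self_or_eq_succAbove i
    · exact hi
    · have hj := hnonneg i
      rw [facetCoord, hi, zero_sub, neg_nonneg] at hj
      have hm : (0 : ℝ) < m + 1 := by positivity
      exact ((div_le_iff₀ hm).mp hj |>.trans_eq (zero_mul _)).antisymm (w.2.1 j)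
  · intro hj
    exact ⟨⟨j, hj⟩, fun i => by simpa [facetCoord, hj] using w.2.1 (j.succAbove i)⟩

variable (j i₀) in
/-- The homeomorphism of a simplex with a ball, taking the facet `j` to the hemisphere
`0 ≤ x i₀`. -/
def homeomorphBall :
    TopSimplex (m + 1) ≃ₜ Metric.closedBall (0 : EuclideanSpace ℝ (Fin (m + 1))) 1 :=
  (continuous_toBall j i₀).homeoOfEquivCompactToT2
    (f := Equiv.ofBijective _ (toBall_bijective j i₀))

end TopSimplex

theorem folding_polytope_triple_homeomorphic_to_ball_sphere_hemisphere
    (n : ℕ) (hn : 1 ≤ n) :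
    ∃ e : FoldingPolytope n ≃ₜ (Metric.closedBall (0 : EuclideanSpace ℝ (Fin n)) 1),
      ⇑e '' foldingBoundary n =
        {x : Metric.closedBall (0 : EuclideanSpace ℝ (Fin n)) 1 |
          (x : EuclideanSpace ℝ (Fin n)) ∈
            Metric.sphere (0 : EuclideanSpace ℝ (Fin n)) 1} ∧
      ⇑e '' foldingEdge n =
        {x : Metric.closedBall (0 : EuclideanSpace ℝ (Fin n)) 1 |
          (x : EuclideanSpace ℝ (Fin n)) ∈
            Metric.sphere (0 : EuclideanSpace ℝ (Fin n)) 1 ∧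
          0 ≤ (x : EuclideanSpace ℝ (Fin n)) ⟨n - 1, by omega⟩} := by
  obtain ⟨m, rfl⟩ := Nat.exists_eq_add_of_le' hn
  let toSimplex := FoldingPolytope.homeomorphSimplex (m := m)
  let toBall := TopSimplex.homeomorphBall (m := m) 1 (Fin.last m)
  refine ⟨toSimplex.trans toBall,
    ((toSimplex.trans toBall).toEquiv.eq_preimage_iff_image_eq _ _).mp (Set.ext fun p => ?_),
    ((toSimplex.trans toBall).toEquiv.eq_preimage_iff_image_eq _ _).mp (Set.ext fun p => ?_)⟩
  · exact FoldingPolytope.mem_foldingBoundary_iff.trans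
      (TopSimplex.norm_toBall_eq_one_iff.symm.trans mem_sphere_zero_iff_norm.symm)
  · exact FoldingPolytope.mem_foldingEdge_iff.trans
      (TopSimplex.norm_toBall_eq_one_and_nonneg_iff.symm.trans
        (and_congr_left' mem_sphere_zero_iff_norm.symm))

end
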